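/- Let A ∈ ℝ^{n×n} have bandwidth at most m, i.e., A i j = 0 whenever |i - j| > m, and suppose all leading principal minors of A are nonzero. Then there exist matrices L, U ∈ ℝ^{n×n} with A = L * U such that L is lower triangular with unit diagonal, U is upper triangular and invertible, and both L and U have bandwidth at most m (L i j = 0 whenever i - j > m or j > i, and U i j = 0 whenever j - i > m or i > j). -/

import Mathlib

/-!
Border by border: if the leading block of a matrix is `L * U` with `L` and `U` invertible, the
factorization extends to one more row and column by solving one triangular system with `U` (for
the new row of `L`) and one with `L` (for the new column of `U`).

Bandwidth is preserved because row `i` of `A` is `L i ᵥ* U`: forward substitution through the upper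
triangular `U` starts with zeros as long as row `i` of `A` does. Columns of `U` are the
transposed case.
-/

open Matrix

section Substitution

variable {ι R : Type*} [Fintype ι] [LinearOrder ι] [NonUnitalNonAssocSemiring R]

theorem vecMul_apply_eq_mul_diag {U : Matrix ι ι R} (hU : U.IsUpperTriangular) {v : ι → R} {j : ι}
    (hv : ∀ k < j, v k = 0) : (v ᵥ* U) j = v j * U j j := by
  refine Finset.sum_eq_single j (fun k _ hkj ↦ ?_) (by simp)
  rcases hkj.lt_or_gt with hlt | hgt
  · exact mul_eq_zero_of_left (hv k hlt) _
  · exact mul_eq_zero_of_right _ (hU hgt)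

theorem apply_eq_zero_of_forall_le_vecMul_eq_zero {U : Matrix ι ι R} (hU : U.IsUpperTriangular)
    {v : ι → R} {j : ι} (hdiag : ∀ k ≤ j, IsRightRegular (U k k))
    (hv : ∀ k ≤ j, (v ᵥ* U) k = 0) : v j = 0 := by
  induction j using WellFoundedLT.induction with
  | ind j ih =>
    have hlt : ∀ k < j, v k = 0 := fun k hk ↦
      ih k hk (fun l hl ↦ hdiag l (hl.trans hk.le)) fun l hl ↦ hv l (hl.trans hk.le)
    have hj : v j * U j j = 0 := by rw [← vecMul_apply_eq_mul_diag hU hlt, hv j le_rfl]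
    exact (hdiag j le_rfl).mul_right_eq_zero_iff.1 hj

end Substitution

/-- `A = L * U` is an LU factorization of `A`, normalized (following Doolittle) so that `L` has unit
diagonal. -/
structure IsLUFactorization {ι R : Type*} [Fintype ι] [LT ι] [NonAssocSemiring R]
    (A L U : Matrix ι ι R) : Prop where
  eq_mul : A = L * U
  isLowerTriangular : L.IsLowerTriangular
  diag_eq_one : ∀ i, L i i = 1
  isUpperTriangular : U.IsUpperTriangular

namespace IsLUFactorization

section Envelope

variable {ι R : Type*} [Fintype ι] [LinearOrder ι] {i j : ι}

theorem lower_apply_eq_zero [NonAssocSemiring R] {A L U : Matrix ι ι R}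
    (h : IsLUFactorization A L U) (hdiag : ∀ k ≤ j, IsRightRegular (U k k))
    (hA : ∀ k ≤ j, A i k = 0) : L i j = 0 := by
  refine apply_eq_zero_of_forall_le_vecMul_eq_zero h.isUpperTriangular hdiag fun k hk ↦ ?_
  rw [← mul_apply_eq_vecMul, ← h.eq_mul, hA k hk]

theorem upper_apply_eq_zero [CommSemiring R] {A L U : Matrix ι ι R}
    (h : IsLUFactorization A L U) (hA : ∀ k ≤ i, A k j = 0) : U i j = 0 := by
  have hLT : Lᵀ.IsUpperTriangular := h.isLowerTriangular.transpose
  refine apply_eq_zero_of_forall_le_vecMul_eq_zero (v := Uᵀ j) hLT (fun k _ ↦ ?_) fun k hk ↦ ?_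
  · rw [transpose_apply, h.diag_eq_one]
    exact isRegular_one.right
  · rw [← mul_apply_eq_vecMul, ← transpose_mul, ← h.eq_mul, transpose_apply, hA k hk]

end Envelope

section Determinant

variable {ι R : Type*} [Fintype ι] [LinearOrder ι] [CommRing R] {A L U : Matrix ι ι R}

theorem det_lower (h : IsLUFactorization A L U) : L.det = 1 := by
  simp [det_of_isLowerTriangular L h.isLowerTriangular, h.diag_eq_one]

theorem det_upper (h : IsLUFactorization A L U) : U.det = A.det := by
  rw [h.eq_mul, det_mul, h.det_lower, one_mul]

theorem isUnit_upper_diag (h : IsLUFactorization A L U) (hA : IsUnit A.det) (i : ι) :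
    IsUnit (U i i) := by
  rw [← h.det_upper, det_of_isUpperTriangular h.isUpperTriangular, IsUnit.prod_univ_iff] at hA
  exact hA i

end Determinant

end IsLUFactorization

section Bordered

variable {n : ℕ} {R : Type*}

/-- The bordered matrix `[[M, c], [r, d]]`: the square matrix `M` extended by a last column `c`, a
last row `r` and a corner entry `d`. -/
def bordered (M : Matrix (Fin n) (Fin n) R) (c r : Fin n → R) (d : R) :
    Matrix (Fin (n + 1)) (Fin (n + 1)) R :=
  of (Fin.snoc (fun i ↦ Fin.snoc (M i) (c i) : Fin n → Fin (n + 1) → R) (Fin.snoc r d))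

variable (M : Matrix (Fin n) (Fin n) R) (c r : Fin n → R) (d : R)

@[simp]
theorem bordered_castSucc_castSucc (i j : Fin n) :
    bordered M c r d i.castSucc j.castSucc = M i j := by
  simp [bordered]

@[simp]
theorem bordered_castSucc_last (i : Fin n) : bordered M c r d i.castSucc (Fin.last n) = c i := by
  simp [bordered]

@[simp]
theorem bordered_last_castSucc (j : Fin n) : bordered M c r d (Fin.last n) j.castSucc = r j := by
  simp [bordered]

@[simp]
theorem bordered_last_last : bordered M c r d (Fin.last n) (Fin.last n) = d := by
  simp [bordered]

theorem eq_bordered (A : Matrix (Fin (n + 1)) (Fin (n + 1)) R) :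
    A = bordered (A.submatrix Fin.castSucc Fin.castSucc) (fun i ↦ A i.castSucc (Fin.last n))
      (fun j ↦ A (Fin.last n) j.castSucc) (A (Fin.last n) (Fin.last n)) := by
  ext i j
  cases i using Fin.lastCases <;> cases j using Fin.lastCases <;> simp

theorem bordered_mul_bordered [CommSemiring R] (M' : Matrix (Fin n) (Fin n) R) (c' r' : Fin n → R)
    (d' : R) :
    bordered M c r d * bordered M' c' r' d' =
      bordered (M * M' + vecMulVec c r') (M *ᵥ c' + d' • c) (r ᵥ* M' + d • r')
        (r ⬝ᵥ c' + d * d') := by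
  ext i j
  cases i using Fin.lastCases <;> cases j using Fin.lastCases <;>
    simp [mul_apply, Fin.sum_univ_castSucc, vecMulVec_apply, mulVec, vecMul, dotProduct, mul_comm]

variable {M}

theorem isLowerTriangular_bordered [Zero R] (hM : M.IsLowerTriangular) :
    (bordered M 0 r d).IsLowerTriangular := by
  intro i j hij
  cases i using Fin.lastCases with
  | last => exact absurd (Fin.le_last j) (not_le_of_gt hij)
  | cast i =>
    cases j using Fin.lastCases with
    | last => simp
    | cast j => simpa using hM (Fin.castSucc_lt_castSucc_iff.1 hij)

theorem isUpperTriangular_bordered [Zero R] (hM : M.IsUpperTriangular) :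
    (bordered M c 0 d).IsUpperTriangular := by
  intro i j hij
  cases j using Fin.lastCases with
  | last => exact absurd (Fin.le_last i) (not_le_of_gt hij)
  | cast j =>
    cases i using Fin.lastCases with
    | last => simp
    | cast i => simpa using hM (Fin.castSucc_lt_castSucc_iff.1 hij)

end Bordered

section Existence

variable {n : ℕ} {R : Type*} [CommRing R]

theorem IsLUFactorization.bordered {A L U : Matrix (Fin n) (Fin n) R}
    (h : IsLUFactorization A L U) (hA : IsUnit A.det) (c r : Fin n → R) (d : R) :
    IsLUFactorization (bordered A c r d) (bordered L 0 (r ᵥ* U⁻¹) 1)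
      (bordered U (L⁻¹ *ᵥ c) 0 (d - (r ᵥ* U⁻¹) ⬝ᵥ (L⁻¹ *ᵥ c))) where
  eq_mul := by
    have hcol : L *ᵥ (L⁻¹ *ᵥ c) = c := by
      rw [mulVec_mulVec, mul_nonsing_inv L (h.det_lower ▸ isUnit_one), one_mulVec]
    have hrow : (r ᵥ* U⁻¹) ᵥ* U = r := by
      rw [vecMul_vecMul, nonsing_inv_mul U (h.det_upper ▸ hA), vecMul_one]
    rw [bordered_mul_bordered, hcol, hrow, ← h.eq_mul]
    simp
  isLowerTriangular := isLowerTriangular_bordered _ _ h.isLowerTriangular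
  diag_eq_one i := by cases i using Fin.lastCases <;> simp [h.diag_eq_one]
  isUpperTriangular := isUpperTriangular_bordered _ _ h.isUpperTriangular

theorem exists_isLUFactorization (A : Matrix (Fin n) (Fin n) R)
    (hminors : ∀ (k : ℕ) (hk : k < n),
      IsUnit (A.submatrix (Fin.castLE hk.le) (Fin.castLE hk.le)).det) :
    ∃ L U, IsLUFactorization A L U := by
  induction n with
  | zero => exact ⟨1, A, (one_mul A).symm, blockTriangular_one, one_apply_eq, fun i ↦ i.elim0⟩
  | succ n ih =>
    obtain ⟨L, U, h⟩ := ih (A.submatrix Fin.castSucc Fin.castSucc) fun k hk ↦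
      hminors k (hk.trans n.lt_succ_self)
    rw [eq_bordered A]
    exact ⟨_, _, h.bordered (hminors n n.lt_succ_self) _ _ _⟩

end Existence

theorem banded_LU_factorization_general {R : Type*} [CommRing R] {n : ℕ} (p q : ℕ)
    (A : Matrix (Fin n) (Fin n) R)
    (hlower : ∀ i j : Fin n, (p : ℤ) < (i : ℤ) - (j : ℤ) → A i j = 0)
    (hupper : ∀ i j : Fin n, (q : ℤ) < (j : ℤ) - (i : ℤ) → A i j = 0)
    (hminors : ∀ (k : ℕ) (hk : k ≤ n),
      IsUnit (A.submatrix (Fin.castLE hk) (Fin.castLE hk)).det) :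
    ∃ L U : Matrix (Fin n) (Fin n) R,
      A = L * U ∧
      (∀ i : Fin n, L i i = 1) ∧
      (∀ i j : Fin n, (i : ℕ) < (j : ℕ) → L i j = 0) ∧
      (∀ i j : Fin n, (j : ℕ) < (i : ℕ) → U i j = 0) ∧
      IsUnit U ∧
      (∀ i j : Fin n, (p : ℤ) < (i : ℤ) - (j : ℤ) → L i j = 0) ∧
      (∀ i j : Fin n, (q : ℤ) < (j : ℤ) - (i : ℤ) → U i j = 0) := by
  obtain ⟨L, U, h⟩ := exists_isLUFactorization A fun k hk ↦ hminors k hk.le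
  have hdet : IsUnit A.det := hminors n le_rfl
  refine ⟨L, U, h.eq_mul, h.diag_eq_one, fun _ _ hij ↦ h.isLowerTriangular hij,
    fun _ _ hij ↦ h.isUpperTriangular hij,
    (isUnit_iff_isUnit_det U).2 (h.det_upper ▸ hdet), fun i j hij ↦ ?_, fun i j hij ↦ ?_⟩
  · exact h.lower_apply_eq_zero (fun k _ ↦ (h.isUnit_upper_diag hdet k).isRegular.right)
      fun k hk ↦ hlower i k (by omega)
  · exact h.upper_apply_eq_zero fun k hk ↦ hupper k j (by omega)

/-- Banded LU factorization: if `A ∈ ℝ^{n×n}` has bandwidth at most `m`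
(`A i j = 0` whenever `|i - j| > m`) and all leading principal minors of `A`
are nonzero, then `A = L * U` where `L` is lower triangular with unit diagonal,
`U` is upper triangular and invertible, and both `L` and `U` have bandwidth at
most `m`. -/
theorem banded_LU_factorization {n : ℕ} (m : ℕ) (A : Matrix (Fin n) (Fin n) ℝ)
    (hband : ∀ i j : Fin n, (m : ℤ) < |(i : ℤ) - (j : ℤ)| → A i j = 0)
    (hminors : ∀ (k : ℕ) (hk : k ≤ n),
      (A.submatrix (Fin.castLE hk) (Fin.castLE hk)).det ≠ 0) :
    ∃ L U : Matrix (Fin n) (Fin n) ℝ,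
      A = L * U ∧
      (∀ i : Fin n, L i i = 1) ∧
      (∀ i j : Fin n, (i : ℕ) < (j : ℕ) → L i j = 0) ∧
      (∀ i j : Fin n, (j : ℕ) < (i : ℕ) → U i j = 0) ∧
      IsUnit U ∧
      (∀ i j : Fin n, (m : ℤ) < (i : ℤ) - (j : ℤ) → L i j = 0) ∧
      (∀ i j : Fin n, (m : ℤ) < (j : ℤ) - (i : ℤ) → U i j = 0) :=
  banded_LU_factorization_general m m A (fun i j hij ↦ hband i j (lt_abs.2 (.inl hij)))
    (fun i j hij ↦ hband i j (lt_abs.2 (.inr (by omega)))) fun k hk ↦ (hminors k hk).isUnit
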